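/- arXiv:1209.0213 — 2 statements merged into one kernel-verified Lean document; each statement's English description precedes it below -/
import Mathlib

section
/- Let ℓ ∈ ℕ and let F : ℝ × ℝ → ℝ be a smooth solution of the ℓ-mode wave equation ∂²F/∂t² = ∂²F/∂x² − W_ℓ(x)·F for which there exists R > 0 such that F(t,x) = 0 whenever |x| ≥ R + |t|. Then there exists a constant C, depending only on F, such that |F(t,x)| ≤ C for all (t,x) ∈ ℝ × ℝ. -/
/-!
The bound comes from two conserved energies and the one-dimensional Sobolev inequality
`F(t,x)² ≤ ∫ (F² + F_x²)`.

The energy `∫ (F_t² + F_x² + W F²)` is conserved and controls `∫ F_x²`. To control `∫ F²`, write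
`F = ∂_t G` with `G(t,x) = h(x) + ∫₀ᵗ F(τ,x) dτ`, where `h'' - W h = F_t(0,·)`. Then `G` solves the
same wave equation and its energy is `∫ (F² + G_x² + W G²)`. Since `F` vanishes for
`|x| ≥ R + |t|`, no flux crosses `|x| = L` for large `L`, so this energy on `[-L, L]` equals its
value at `t = 0`, that is, `∫ (F(0,·)² + h'² + W h²)`, and it remains to find `h` for which this is
bounded in `L` (`exists_finite_energy_potential`).

The static equation `φ'' = W φ` has the explicit solutions `φ = (ρ + m) ρ^k` with `k = ℓ` and
`k = -(ℓ+1)` (`static_second_deriv`), the first increasing and the second decreasing in `x`, with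
Wronskian `2ℓ + 1`. Variation of parameters gives an `h` which is a multiple of the increasing one
to the left of the support of `F_t(0,·)` and of the decreasing one to the right of it. Hence
`h h'` has a favourable sign at both ends, and integrating `d/dx (h h') = h'² + W h² + h F_t(0,·)`
bounds the energy of `h`.
-/

/-- The tortoise radial coordinate `s(ρ) = ρ - m²/ρ + 2m·log(ρ/m)`. -/
noncomputable def tortoise (m ρ : ℝ) : ℝ := ρ - m ^ 2 / ρ + 2 * m * Real.log (ρ / m)

/-- The potential `V₁(ρ) = 2mρ³/(ρ+m)⁶`. -/
noncomputable def V1 (m ρ : ℝ) : ℝ := 2 * m * ρ ^ 3 / (ρ + m) ^ 6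

/-- The potential `V₂(ρ) = ρ²/(ρ+m)⁴`. -/
noncomputable def V2 (m ρ : ℝ) : ℝ := ρ ^ 2 / (ρ + m) ^ 4

open MeasureTheory Function

/-! ### Calculus with parameters -/

/-- Differentiation under the integral sign over a compact interval. -/
lemma hasDerivAt_param_integral (f f' : ℝ → ℝ → ℝ)
    (hf : ∀ t x, HasDerivAt (fun τ => f τ x) (f' t x) t)
    (hc : Continuous (uncurry f)) (hc' : Continuous (uncurry f')) (a b t : ℝ) :
    HasDerivAt (fun τ => ∫ x in a..b, f τ x) (∫ x in a..b, f' t x) t := by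
  obtain ⟨C, hC⟩ := ((isCompact_closedBall t 1).prod (isCompact_uIcc (a := a)
    (b := b))).exists_bound_of_continuousOn hc'.continuousOn
  have hsec : ∀ s, Continuous (f s) := fun s => hc.comp (by fun_prop : Continuous fun x => (s, x))
  have hsec' : ∀ s, Continuous (f' s) := fun s =>
    hc'.comp (by fun_prop : Continuous fun x => (s, x))
  refine (intervalIntegral.hasDerivAt_integral_of_dominated_loc_of_deriv_le
    (bound := fun _ => C) (Metric.closedBall_mem_nhds t one_pos)
    (Filter.Eventually.of_forall fun s => (hsec s).aestronglyMeasurable)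
    ((hsec t).intervalIntegrable _ _) (hsec' t).aestronglyMeasurable ?_ (by simp) ?_).2
  · exact Filter.Eventually.of_forall fun x hx s hs =>
      hC (s, x) ⟨hs, Set.uIoc_subset_uIcc hx⟩
  · exact Filter.Eventually.of_forall fun x _ s _ => hf s x

/-- The directional derivative of `F : ℝ → ℝ → ℝ`, as a function on the plane, in direction `v`. -/
noncomputable def pd (v : ℝ × ℝ) (F : ℝ → ℝ → ℝ) (t x : ℝ) : ℝ :=
  fderiv ℝ (uncurry F) (t, x) v

lemma pd_contDiff {F : ℝ → ℝ → ℝ}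
    (hF : ContDiff ℝ (⊤ : ℕ∞) (uncurry F)) (v : ℝ × ℝ) : ContDiff ℝ (⊤ : ℕ∞) (uncurry (pd v F)) := by
  have h : ContDiff ℝ (⊤ : ℕ∞) (fderiv ℝ (uncurry F)) :=
    hF.fderiv_right (by simp)
  have h2 : ContDiff ℝ (⊤ : ℕ∞) fun p => fderiv ℝ (uncurry F) p v := h.clm_apply contDiff_const
  exact h2

lemma pd_hasDerivAt_fst {F : ℝ → ℝ → ℝ}
    (hF : ContDiff ℝ (⊤ : ℕ∞) (uncurry F)) (t x : ℝ) : HasDerivAt (fun τ => F τ x) (pd (1, 0) F t x) t := by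
  have h := (hF.differentiable (by simp) (t, x)).hasFDerivAt
  have h1 : HasDerivAt (fun τ : ℝ => (τ, x)) ((1 : ℝ), (0 : ℝ)) t :=
    (hasDerivAt_id t).prodMk (hasDerivAt_const t x)
  exact HasFDerivAt.comp_hasDerivAt (f := fun τ : ℝ => (τ, x)) t h h1

lemma pd_hasDerivAt_snd {F : ℝ → ℝ → ℝ}
    (hF : ContDiff ℝ (⊤ : ℕ∞) (uncurry F)) (t x : ℝ) : HasDerivAt (F t) (pd (0, 1) F t x) x := by
  have h := (hF.differentiable (by simp) (t, x)).hasFDerivAt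
  have h1 : HasDerivAt (fun y : ℝ => (t, y)) ((0 : ℝ), (1 : ℝ)) x :=
    (hasDerivAt_const x t).prodMk (hasDerivAt_id x)
  exact HasFDerivAt.comp_hasDerivAt (f := fun y : ℝ => (t, y)) x h h1

lemma pd_comm {F : ℝ → ℝ → ℝ}
    (hF : ContDiff ℝ (⊤ : ℕ∞) (uncurry F)) (v w : ℝ × ℝ) (t x : ℝ) : pd v (pd w F) t x = pd w (pd v F) t x := by
  have h : ContDiff ℝ (⊤ : ℕ∞) (fderiv ℝ (uncurry F)) :=
    hF.fderiv_right (by simp)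
  have key : ∀ v w : ℝ × ℝ, pd v (pd w F) t x
      = fderiv ℝ (fderiv ℝ (uncurry F)) (t, x) v w := by
    intro v w
    have h1 := (h.differentiable (by simp) (t, x)).hasFDerivAt
    have h2 := (h1.clm_apply (hasFDerivAt_const w (t, x))).fderiv
    have h3 : uncurry (pd w F) = fun p => fderiv ℝ (uncurry F) p w := rfl
    simp only [pd, h3] at *
    rw [h2]
    simp
  rw [key, key]
  exact (hF.contDiffAt.isSymmSndFDerivAt
    (by simpa using WithTop.coe_le_coe.2 (le_top : (2 : ℕ∞) ≤ ⊤))) v w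


/-! ### Energy conservation -/

/-- Conservation of `∫ (a² + b² + W c²)` on `[-L, L]` while `a` vanishes at `±L`. For a solution `u`
of the wave equation, `(a, b, c) = (u_t, u_x, u)`; only the listed relations between these functions
matter. -/
lemma energy_conservation {W : ℝ → ℝ} (hW : Continuous W) {a b c p q : ℝ → ℝ → ℝ}
    (ha : Continuous (uncurry a)) (hb : Continuous (uncurry b)) (hc : Continuous (uncurry c))
    (hp : Continuous (uncurry p)) (hq : Continuous (uncurry q))
    (hct : ∀ t x, HasDerivAt (fun τ => c τ x) (a t x) t)
    (hat : ∀ t x, HasDerivAt (fun τ => a τ x) (p t x) t)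
    (hbt : ∀ t x, HasDerivAt (fun τ => b τ x) (q t x) t)
    (hax : ∀ t x, HasDerivAt (a t) (q t x) x)
    (hbx : ∀ t x, HasDerivAt (b t) (p t x + W x * c t x) x)
    {L T : ℝ} (hbd : ∀ t, |t| ≤ T → a t L = 0 ∧ a t (-L) = 0) (t : ℝ) (ht : |t| ≤ T) :
    ∫ x in (-L)..L, (a t x ^ 2 + b t x ^ 2 + W x * c t x ^ 2)
      = ∫ x in (-L)..L, (a 0 x ^ 2 + b 0 x ^ 2 + W x * c 0 x ^ 2) := by
  have hT : 0 ≤ T := (abs_nonneg t).trans ht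
  let e : ℝ → ℝ → ℝ := fun t x => a t x ^ 2 + b t x ^ 2 + W x * c t x ^ 2
  let e' : ℝ → ℝ → ℝ := fun t x =>
    2 * (q t x * b t x + a t x * (p t x + W x * c t x))
  have hWu : Continuous (fun z : ℝ × ℝ => W z.2) := hW.comp continuous_snd
  have he : Continuous (uncurry e) :=
    ((ha.pow 2).add (hb.pow 2)).add (hWu.mul (hc.pow 2))
  have he' : Continuous (uncurry e') :=
    continuous_const.mul ((hq.mul hb).add (ha.mul (hp.add (hWu.mul hc))))
  have hder : ∀ t x, HasDerivAt (fun τ => e τ x) (e' t x) t := by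
    intro t x
    have := (((hat t x).pow 2).add ((hbt t x).pow 2)).add (((hct t x).pow 2).const_mul (W x))
    refine this.congr_deriv ?_
    simp only [e']
    push_cast
    ring
  have hI := fun s => hasDerivAt_param_integral e e' hder he he' (-L) L s
  -- The density changes by the flux: `∂_t e = ∂_x (2 a b)`.
  have hzero : ∀ s, |s| ≤ T → ∫ x in (-L)..L, e' s x = 0 := by
    intro s hs
    have h1 : ∀ x, HasDerivAt (fun y => 2 * (a s y * b s y)) (e' s x) x :=
      fun x => ((hax s x).mul (hbx s x)).const_mul 2
    rw [intervalIntegral.integral_eq_sub_of_hasDerivAt (fun x _ => h1 x)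
      ((he'.comp (by fun_prop : Continuous fun x => (s, x))).intervalIntegrable _ _)]
    simp [(hbd s hs).1, (hbd s hs).2]
  have hmv := Convex.norm_image_sub_le_of_norm_hasDerivWithin_le (C := 0)
    (s := Set.Icc (-T) T) (x := 0) (y := t) (fun s _ => (hI s).hasDerivWithinAt)
    (fun s hs => by rw [hzero s (abs_le.2 hs)]; simp) (convex_Icc _ _)
    ⟨by linarith, hT⟩ (abs_le.1 ht)
  rw [zero_mul] at hmv
  exact sub_eq_zero.1 (norm_le_zero_iff.1 hmv)

lemma integral_of_vanishing {φ : ℝ → ℝ} {A L : ℝ} (hAL : A < L) (h : ∀ x, A < |x| → φ x = 0) :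
    ∫ x in (-L)..L, φ x = ∫ x, φ x := by
  apply intervalIntegral.integral_eq_integral_of_support_subset
  intro x hx
  have h1 : |x| ≤ A := not_lt.1 fun h' => hx (h x h')
  have := abs_le.1 h1
  constructor <;> linarith

/-! ### The tortoise coordinate and the static solutions -/

lemma tortoise_hasDerivAt {m ρ : ℝ} (hm : 0 < m) (hρ : 0 < ρ) :
    HasDerivAt (tortoise m) ((ρ + m) ^ 2 / ρ ^ 2) ρ := by
  have h1 : HasDerivAt (fun r : ℝ => r - m ^ 2 / r + 2 * m * Real.log (r / m))
      (1 - (0 * ρ - m ^ 2 * 1) / ρ ^ 2 + 2 * m * ((1 / m) / (ρ / m))) ρ :=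
    ((hasDerivAt_id ρ).sub ((hasDerivAt_const ρ (m ^ 2)).div (hasDerivAt_id ρ) hρ.ne')).add
      ((((hasDerivAt_id ρ).div_const m).log (by simp; exact ⟨hρ.ne', hm.ne'⟩)).const_mul (2 * m))
  refine h1.congr_deriv ?_
  field_simp
  ring

/-- The tortoise coordinate expands distances, because its derivative `(1 + m/ρ)²` exceeds `1`. -/
lemma tortoise_expands {m a b : ℝ} (hm : 0 < m) (ha : 0 < a) (hab : a ≤ b) :
    b - a ≤ tortoise m b - tortoise m a := by
  have h1 : m ^ 2 / b ≤ m ^ 2 / a := by gcongr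
  have h2 : Real.log (a / m) ≤ Real.log (b / m) :=
    Real.log_le_log (by positivity) (by gcongr)
  have h3 := mul_le_mul_of_nonneg_left h2 (by positivity : 0 ≤ 2 * m)
  unfold tortoise
  linarith

lemma sigma_continuous {m : ℝ} (hm : 0 < m) {σ : ℝ → ℝ}
    (hσpos : ∀ x : ℝ, 0 < σ x) (hσ : ∀ x : ℝ, tortoise m (σ x) = x) :
    Continuous σ := by
  have h : LipschitzWith 1 σ := by
    refine LipschitzWith.of_dist_le_mul fun x y => ?_
    rw [Real.dist_eq, Real.dist_eq, NNReal.coe_one, one_mul]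
    rcases le_total (σ x) (σ y) with h | h
    · have := tortoise_expands hm (hσpos x) h
      rw [hσ, hσ] at this
      rw [abs_sub_comm, abs_of_nonneg (by linarith), abs_sub_comm]
      exact this.trans (le_abs_self _)
    · have := tortoise_expands hm (hσpos y) h
      rw [hσ, hσ] at this
      rw [abs_of_nonneg (by linarith)]
      exact this.trans (le_abs_self _)
  exact h.continuous

lemma sigma_hasDerivAt {m : ℝ} (hm : 0 < m) {σ : ℝ → ℝ}
    (hσpos : ∀ x : ℝ, 0 < σ x) (hσ : ∀ x : ℝ, tortoise m (σ x) = x)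
    (x : ℝ) : HasDerivAt σ (σ x ^ 2 / (σ x + m) ^ 2) x := by
  have h0 := hσpos x
  have := HasDerivAt.of_local_left_inverse (sigma_continuous hm hσpos hσ).continuousAt
    (tortoise_hasDerivAt hm (hσpos x)) (by positivity) (Filter.Eventually.of_forall hσ)
  rwa [inv_div] at this

lemma sigma_rpow_hasDerivAt {m : ℝ} (hm : 0 < m) {σ : ℝ → ℝ}
    (hσpos : ∀ x : ℝ, 0 < σ x) (hσ : ∀ x : ℝ, tortoise m (σ x) = x)
    (k x : ℝ) :
    HasDerivAt (fun y => σ y ^ k) (k * σ x * σ x ^ k / (σ x + m) ^ 2) x := by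
  have h0 := hσpos x
  refine ((sigma_hasDerivAt hm hσpos hσ x).rpow_const (Or.inl h0.ne')).congr_deriv ?_
  rw [Real.rpow_sub_one h0.ne']
  field_simp

lemma static_deriv {m : ℝ} (hm : 0 < m) {σ : ℝ → ℝ}
    (hσpos : ∀ x : ℝ, 0 < σ x) (hσ : ∀ x : ℝ, tortoise m (σ x) = x)
    (k x : ℝ) :
    HasDerivAt (fun y => (σ y + m) * σ y ^ k)
      (σ x ^ k * (σ x ^ 2 + k * σ x * (σ x + m)) / (σ x + m) ^ 2) x := by
  have h0 := hσpos x
  refine (((sigma_hasDerivAt hm hσpos hσ x).add_const m).mul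
    (sigma_rpow_hasDerivAt hm hσpos hσ k x)).congr_deriv ?_
  field_simp

/-- `φ = (ρ + m) ρ^k` satisfies `φ'' = (V₁ + k(k+1) V₂) φ` in the tortoise coordinate. -/
lemma static_second_deriv {m : ℝ} (hm : 0 < m) {σ : ℝ → ℝ}
    (hσpos : ∀ x : ℝ, 0 < σ x) (hσ : ∀ x : ℝ, tortoise m (σ x) = x)
    (k x : ℝ) :
    HasDerivAt (fun y => σ y ^ k * (σ y ^ 2 + k * σ y * (σ y + m)) / (σ y + m) ^ 2)
      ((V1 m (σ x) + k * (k + 1) * V2 m (σ x)) * ((σ x + m) * σ x ^ k)) x := by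
  have h0 := hσpos x
  have hs := sigma_hasDerivAt hm hσpos hσ x
  have hk := sigma_rpow_hasDerivAt hm hσpos hσ k x
  have h1 := ((hk.mul ((hs.pow 2).add ((hs.const_mul k).mul (hs.add_const m)))).div
    ((hs.add_const m).pow 2) (pow_ne_zero 2 (by positivity)))
  refine h1.congr_deriv ?_
  simp only [V1, V2, Pi.add_apply, Pi.mul_apply, Pi.pow_apply]
  field_simp
  push_cast
  ring

lemma W_continuous {m : ℝ} (hm : 0 < m) {σ : ℝ → ℝ}
    (hσpos : ∀ x : ℝ, 0 < σ x) (hσ : ∀ x : ℝ, tortoise m (σ x) = x)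
    (c : ℝ) : Continuous fun x => V1 m (σ x) + c * V2 m (σ x) := by
  have h := sigma_continuous hm hσpos hσ
  have hne : ∀ x, σ x + m ≠ 0 := fun x => by have := hσpos x; positivity
  unfold V1 V2
  refine Continuous.add ?_ (continuous_const.mul ?_)
  · exact (by fun_prop : Continuous fun x => 2 * m * σ x ^ 3).div (by fun_prop)
      fun x => pow_ne_zero _ (hne x)
  · exact (by fun_prop : Continuous fun x => σ x ^ 2).div (by fun_prop)
      fun x => pow_ne_zero _ (hne x)

/-- Variation of parameters with the two explicit static solutions: the inhomogeneous equation
`h'' = W h + g` has a solution for which `h h'` has the decaying sign at both ends. -/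
lemma exists_static_solution {m : ℝ} (hm : 0 < m) {σ : ℝ → ℝ}
    (hσpos : ∀ x : ℝ, 0 < σ x) (hσ : ∀ x : ℝ, tortoise m (σ x) = x)
    (ℓ : ℕ) {W : ℝ → ℝ}
    (hW : ∀ x : ℝ, W x = V1 m (σ x) + (ℓ : ℝ) * ((ℓ : ℝ) + 1) * V2 m (σ x))
    {g : ℝ → ℝ} (hg : Continuous g) {A : ℝ} (hgA : ∀ x, A ≤ |x| → g x = 0) :
    ∃ h h' : ℝ → ℝ, (∀ x, HasDerivAt h (h' x) x) ∧
      (∀ x, HasDerivAt h' (W x * h x + g x) x) ∧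
      ∀ L, A < L → h L * h' L ≤ 0 ∧ 0 ≤ h (-L) * h' (-L) := by
  have hσc := sigma_continuous hm hσpos hσ
  let φ : ℝ → ℝ → ℝ := fun k y => (σ y + m) * σ y ^ k
  let φ' : ℝ → ℝ → ℝ := fun k y => σ y ^ k * (σ y ^ 2 + k * σ y * (σ y + m)) / (σ y + m) ^ 2
  have hφ : ∀ k x, HasDerivAt (φ k) (φ' k x) x := static_deriv hm hσpos hσ
  have hφ' : ∀ k, k * (k + 1) = (ℓ : ℝ) * (ℓ + 1) → ∀ x,
      HasDerivAt (φ' k) (W x * φ k x) x := by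
    intro k hk x
    rw [hW, ← hk]
    exact static_second_deriv hm hσpos hσ k x
  have hφc : ∀ k, Continuous (φ k) := fun k =>
    continuous_iff_continuousAt.2 fun x => (hφ k x).continuousAt
  obtain ⟨k₁, hk₁⟩ : ∃ k : ℝ, k = ℓ := ⟨_, rfl⟩
  obtain ⟨k₂, hk₂⟩ : ∃ k : ℝ, k = -((ℓ : ℝ) + 1) := ⟨_, rfl⟩
  have hd₁ := hφ' k₁ (by rw [hk₁])
  have hd₂ := hφ' k₂ (by rw [hk₂]; ring)
  have hwr : ∀ x, φ' k₁ x * φ k₂ x - φ k₁ x * φ' k₂ x = 2 * ℓ + 1 := by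
    intro x
    have h0 := hσpos x
    have hpow : σ x ^ k₂ = (σ x ^ k₁ * σ x)⁻¹ := by
      rw [hk₂, hk₁, Real.rpow_neg h0.le, Real.rpow_add_one h0.ne']
    have hk : 0 < σ x ^ k₁ := Real.rpow_pos_of_pos h0 _
    simp only [φ, φ', hpow]
    rw [show k₂ = -(k₁ + 1) by rw [hk₂, hk₁], ← hk₁]
    field_simp
    ring
  have hw : (0 : ℝ) < 2 * ℓ + 1 := by positivity
  -- `I₁ = ∫_{-A}^x φ_{k₁} g` and `I₂ = ∫_x^A φ_{k₂} g`, with `[-A, A]` containing the support of `g`.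
  let I₁ : ℝ → ℝ := fun x => ∫ y in (-A)..x, φ k₁ y * g y
  let I₂ : ℝ → ℝ := fun x => -∫ y in A..x, φ k₂ y * g y
  have hc₁ : Continuous fun y => φ k₁ y * g y := (hφc _).mul hg
  have hc₂ : Continuous fun y => φ k₂ y * g y := (hφc _).mul hg
  have hI₁ : ∀ x, HasDerivAt I₁ (φ k₁ x * g x) x := fun x =>
    intervalIntegral.integral_hasDerivAt_right (hc₁.intervalIntegrable _ _)
      (hc₁.stronglyMeasurableAtFilter _ _) hc₁.continuousAt
  have hI₂ : ∀ x, HasDerivAt I₂ (-(φ k₂ x * g x)) x := fun x =>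
    (intervalIntegral.integral_hasDerivAt_right (hc₂.intervalIntegrable _ _)
      (hc₂.stronglyMeasurableAtFilter _ _) hc₂.continuousAt).neg
  have hout : ∀ (k a b : ℝ), (∀ y ∈ Set.uIoc a b, A ≤ |y|) → ∫ y in a..b, φ k y * g y = 0 := by
    intro k a b hab
    rw [intervalIntegral.integral_congr_ae (g := fun _ => 0), intervalIntegral.integral_zero]
    exact Filter.Eventually.of_forall fun y hy => by simp [hgA y (hab y hy)]
  have hright : ∀ L, A < L → I₂ L = 0 := by
    intro L hAL
    simp only [I₂, neg_eq_zero]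
    apply hout
    intro y hy
    rw [Set.uIoc_of_le hAL.le] at hy
    exact hy.1.le.trans (le_abs_self y)
  have hleft : ∀ L, A < L → I₁ (-L) = 0 := by
    intro L hAL
    apply hout
    intro y hy
    rw [Set.uIoc_of_ge (by linarith)] at hy
    exact (by linarith [hy.2] : A ≤ -y).trans (neg_le_abs y)
  let h : ℝ → ℝ := fun x => -(2 * ℓ + 1 : ℝ)⁻¹ * (φ k₂ x * I₁ x + φ k₁ x * I₂ x)
  let h' : ℝ → ℝ := fun x => -(2 * ℓ + 1 : ℝ)⁻¹ * (φ' k₂ x * I₁ x + φ' k₁ x * I₂ x)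
  refine ⟨h, h', fun x => ?_, fun x => ?_, fun L hAL => ⟨?_, ?_⟩⟩
  · refine ((((hφ k₂ x).mul (hI₁ x)).add ((hφ k₁ x).mul (hI₂ x))).const_mul _).congr_deriv ?_
    simp only [h']
    ring
  · refine ((((hd₂ x).mul (hI₁ x)).add ((hd₁ x).mul (hI₂ x))).const_mul _).congr_deriv ?_
    have hg' : g x = (2 * ℓ + 1 : ℝ)⁻¹ * (φ' k₁ x * φ k₂ x - φ k₁ x * φ' k₂ x) * g x := by
      rw [hwr, inv_mul_cancel₀ hw.ne', one_mul]
    simp only [h]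
    linear_combination -hg'
  · have h0 := hσpos L
    have hneg : φ k₂ L * φ' k₂ L ≤ 0 := by
      refine mul_nonpos_of_nonneg_of_nonpos (by positivity) ?_
      refine div_nonpos_of_nonpos_of_nonneg ?_ (by positivity)
      refine mul_nonpos_of_nonneg_of_nonpos (by positivity) ?_
      have : 0 ≤ (ℓ : ℝ) * (σ L * (σ L + m)) := by positivity
      have : 0 ≤ σ L * m := by positivity
      rw [hk₂]
      nlinarith
    have heq : h L * h' L = ((2 * ℓ + 1 : ℝ)⁻¹ * I₁ L) ^ 2 * (φ k₂ L * φ' k₂ L) := by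
      simp only [h, h', hright L hAL]
      ring
    rw [heq]
    exact mul_nonpos_of_nonneg_of_nonpos (sq_nonneg _) hneg
  · have h0 := hσpos (-L)
    have hk : 0 ≤ k₁ := by rw [hk₁]; positivity
    have hpos : 0 ≤ φ k₁ (-L) * φ' k₁ (-L) := by positivity
    have heq : h (-L) * h' (-L)
        = ((2 * ℓ + 1 : ℝ)⁻¹ * I₂ (-L)) ^ 2 * (φ k₁ (-L) * φ' k₁ (-L)) := by
      simp only [h, h', hleft L hAL]
      ring
    rw [heq]
    positivity

/-- A solution of `h'' = W h + g` whose energies on the intervals `[-L, L]` are bounded. -/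
lemma exists_finite_energy_potential {m : ℝ} (hm : 0 < m) {σ : ℝ → ℝ}
    (hσpos : ∀ x : ℝ, 0 < σ x) (hσ : ∀ x : ℝ, tortoise m (σ x) = x)
    (ℓ : ℕ) {W : ℝ → ℝ}
    (hW : ∀ x : ℝ, W x = V1 m (σ x) + (ℓ : ℝ) * ((ℓ : ℝ) + 1) * V2 m (σ x))
    {g : ℝ → ℝ} (hg : Continuous g) {A : ℝ} (hgA : ∀ x, A ≤ |x| → g x = 0) :
    ∃ h h' : ℝ → ℝ, (∀ x, HasDerivAt h (h' x) x) ∧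
      (∀ x, HasDerivAt h' (W x * h x + g x) x) ∧
      ∃ K, ∀ L, A < L → ∫ x in (-L)..L, (h' x ^ 2 + W x * h x ^ 2) ≤ K := by
  have hWc : Continuous W := by
    rw [funext hW]
    exact W_continuous hm hσpos hσ _
  obtain ⟨h, h', h1, h2, h3⟩ := exists_static_solution hm hσpos hσ ℓ hW hg hgA
  refine ⟨h, h', h1, h2, -∫ x, h x * g x, fun L hAL => ?_⟩
  have hc : Continuous h := continuous_iff_continuousAt.2 fun x => (h1 x).continuousAt
  have hc' : Continuous h' := continuous_iff_continuousAt.2 fun x => (h2 x).continuousAt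
  have hd : ∀ x, HasDerivAt (fun y => h y * h' y) ((h' x ^ 2 + W x * h x ^ 2) + h x * g x) x :=
    fun x => ((h1 x).mul (h2 x)).congr_deriv (by ring)
  have hce : Continuous fun x => h' x ^ 2 + W x * h x ^ 2 := by fun_prop
  have hcg : Continuous fun x => h x * g x := by fun_prop
  have hint := intervalIntegral.integral_eq_sub_of_hasDerivAt (a := -L) (b := L)
    (fun x _ => hd x) ((hce.add hcg).intervalIntegrable _ _)
  rw [intervalIntegral.integral_add (hce.intervalIntegrable _ _) (hcg.intervalIntegrable _ _),
    integral_of_vanishing (φ := fun x => h x * g x) hAL (fun x hx => by rw [hgA x hx.le, mul_zero])] at hint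
  have := h3 L hAL
  linarith


/-- Mode version of Theorem 1 of the paper: a smooth solution `F` of the `ℓ`-mode wave
equation `∂²F/∂t² = ∂²F/∂x² - W_ℓ(x)·F`, evolving from compactly supported data in the
sense that `F(t,x) = 0` whenever `|x| ≥ R + |t|`, is uniformly bounded:
there is a constant `C`, depending only on `F`, with `|F(t,x)| ≤ C` for all `(t,x)`. -/
theorem mode_uniform_bound (m : ℝ) (hm : 0 < m) (ℓ : ℕ)
    (σ : ℝ → ℝ) (hσpos : ∀ x : ℝ, 0 < σ x) (hσ : ∀ x : ℝ, tortoise m (σ x) = x)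
    (W : ℝ → ℝ) (hW : ∀ x : ℝ, W x = V1 m (σ x) + (ℓ : ℝ) * ((ℓ : ℝ) + 1) * V2 m (σ x))
    (F : ℝ → ℝ → ℝ) (hF : ContDiff ℝ (⊤ : ℕ∞) (Function.uncurry F))
    (heq : ∀ t x : ℝ, deriv (deriv (fun τ => F τ x)) t = deriv (deriv (F t)) x - W x * F t x)
    (R : ℝ) (hR : 0 < R) (hsupp : ∀ t x : ℝ, R + |t| ≤ |x| → F t x = 0) :
    ∃ C : ℝ, ∀ t x : ℝ, |F t x| ≤ C := by
  have hWc : Continuous W := by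
    rw [funext hW]
    exact W_continuous hm hσpos hσ _
  have hW0 : ∀ x, 0 ≤ W x := by
    intro x
    have h0 := hσpos x
    rw [hW]
    unfold V1 V2
    positivity
  set Ft := pd (1, 0) F with hFt
  set Fx := pd (0, 1) F with hFx
  have hFtS : ContDiff ℝ (⊤ : ℕ∞) (uncurry Ft) := pd_contDiff hF _
  have hFxS : ContDiff ℝ (⊤ : ℕ∞) (uncurry Fx) := pd_contDiff hF _
  have dFt : ∀ t x, HasDerivAt (fun τ => F τ x) (Ft t x) t := pd_hasDerivAt_fst hF
  have dFx : ∀ t x, HasDerivAt (F t) (Fx t x) x := pd_hasDerivAt_snd hF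
  set Ftt := pd (1, 0) Ft with hFtt
  set Fxt := pd (1, 0) Fx with hFxt
  have hFttC : Continuous (uncurry Ftt) := (pd_contDiff hFtS _).continuous
  have hFxtC : Continuous (uncurry Fxt) := (pd_contDiff hFxS _).continuous
  have dFtt : ∀ t x, HasDerivAt (fun τ => Ft τ x) (Ftt t x) t := pd_hasDerivAt_fst hFtS
  have dFxt : ∀ t x, HasDerivAt (fun τ => Fx τ x) (Fxt t x) t := pd_hasDerivAt_fst hFxS
  have dFtx : ∀ t x, HasDerivAt (Ft t) (Fxt t x) x := by
    intro t x
    have := pd_hasDerivAt_snd hFtS t x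
    rwa [hFt, pd_comm hF] at this
  have dFxx : ∀ t x, HasDerivAt (Fx t) (Ftt t x + W x * F t x) x := by
    intro t x
    have h1 : deriv (fun τ => F τ x) = fun τ => Ft τ x := funext fun τ => (dFt τ x).deriv
    have h2 : deriv (F t) = Fx t := funext fun y => (dFx t y).deriv
    have h3 := pd_hasDerivAt_snd hFxS t x
    have h4 := heq t x
    rw [h1, h2, (dFtt t x).deriv, h3.deriv] at h4
    exact h3.congr_deriv (by linarith)
  have sec : ∀ {f : ℝ → ℝ → ℝ}, Continuous (uncurry f) → ∀ t, Continuous (f t) :=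
    fun hf t => hf.comp (by fun_prop : Continuous fun x => (t, x))
  have sec' : ∀ {f : ℝ → ℝ → ℝ}, Continuous (uncurry f) → ∀ x, Continuous fun t => f t x :=
    fun hf x => hf.comp (by fun_prop : Continuous fun t => (t, x))
  have hFC := hF.continuous
  have hFtC := hFtS.continuous
  have hFxC := hFxS.continuous
  -- Outside the closed light cone `F` vanishes near the point, so its derivatives vanish there.
  have hFt0 : ∀ t x, R + |t| < |x| → Ft t x = 0 := by
    intro t x htx
    have hev : (fun τ => F τ x) =ᶠ[nhds t] fun _ => 0 := by
      have : ∀ᶠ τ in nhds t, R + |τ| < |x| :=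
        (by fun_prop : Continuous fun τ : ℝ => R + |τ|).continuousAt.eventually_lt
          continuousAt_const htx
      exact this.mono fun τ h => hsupp τ x h.le
    exact (dFt t x).unique ((hasDerivAt_const t 0).congr_of_eventuallyEq hev)
  have hFx0 : ∀ t x, R + |t| < |x| → Fx t x = 0 := by
    intro t x htx
    have hev : F t =ᶠ[nhds x] fun _ => 0 := by
      have : ∀ᶠ y in nhds x, R + |t| < |y| :=
        continuousAt_const.eventually_lt continuous_abs.continuousAt htx
      exact this.mono fun y h => hsupp t y h.le
    exact (dFx t x).unique ((hasDerivAt_const x 0).congr_of_eventuallyEq hev)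
  obtain ⟨h, h', dh, dh', K, hK⟩ := exists_finite_energy_potential hm hσpos hσ ℓ hW
    (sec hFtC 0) (A := R + 1)
    (fun x hx => hFt0 0 x (by rw [abs_zero]; linarith))
  have hhc : Continuous h := continuous_iff_continuousAt.2 fun x => (dh x).continuousAt
  have hhc' : Continuous h' := continuous_iff_continuousAt.2 fun x => (dh' x).continuousAt
  -- The time primitive `G` of `F` and its spatial derivative `Gx`.
  let G : ℝ → ℝ → ℝ := fun t x => h x + ∫ τ in (0 : ℝ)..t, F τ x
  let Gx : ℝ → ℝ → ℝ := fun t x => h' x + ∫ τ in (0 : ℝ)..t, Fx τ x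
  have prim : ∀ {f : ℝ → ℝ → ℝ}, Continuous (uncurry f) →
      Continuous (uncurry fun t x => ∫ τ in (0 : ℝ)..t, f τ x) := by
    intro f hf
    exact intervalIntegral.continuous_parametric_intervalIntegral_of_continuous
      (f := fun (p : ℝ × ℝ) τ => f τ p.2) (s := fun p => p.1)
      (hf.comp (by fun_prop : Continuous fun q : (ℝ × ℝ) × ℝ => (q.2, q.1.2))) continuous_fst
  have primD : ∀ {f : ℝ → ℝ → ℝ}, Continuous (uncurry f) → ∀ t x,
      HasDerivAt (fun t => ∫ τ in (0 : ℝ)..t, f τ x) (f t x) t := fun hf t x =>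
    intervalIntegral.integral_hasDerivAt_right ((sec' hf x).intervalIntegrable _ _)
      ((sec' hf x).stronglyMeasurableAtFilter _ _) (sec' hf x).continuousAt
  have hGC : Continuous (uncurry G) := (hhc.comp continuous_snd).add (prim hFC)
  have hGxC : Continuous (uncurry Gx) := (hhc'.comp continuous_snd).add (prim hFxC)
  have dGt : ∀ t x, HasDerivAt (fun τ => G τ x) (F t x) t := fun t x =>
    (primD hFC t x).const_add (h x)
  have dGxt : ∀ t x, HasDerivAt (fun τ => Gx τ x) (Fx t x) t := fun t x =>
    (primD hFxC t x).const_add (h' x)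
  have dGxx : ∀ t x, HasDerivAt (Gx t) (Ft t x + W x * G t x) x := by
    intro t x
    have hWu : Continuous (fun z : ℝ × ℝ => W z.2) := hWc.comp continuous_snd
    have hcont : Continuous (uncurry fun t x => Ftt t x + W x * F t x) :=
      hFttC.add (hWu.mul hFC)
    have h1 := hasDerivAt_param_integral (fun y τ => Fx τ y)
      (fun y τ => Ftt τ y + W y * F τ y) (fun y τ => dFxx τ y)
      (hFxC.comp continuous_swap) (hcont.comp continuous_swap) 0 t x
    refine ((dh' x).add h1).congr_deriv ?_
    rw [intervalIntegral.integral_add ((sec' hFttC x).intervalIntegrable _ _)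
      (((sec' hFC x).const_mul (W x)).intervalIntegrable _ _),
      intervalIntegral.integral_const_mul,
      intervalIntegral.integral_eq_sub_of_hasDerivAt (fun τ _ => dFtt τ x)
        ((sec' hFttC x).intervalIntegrable _ _)]
    simp only [G]
    ring
  set K₁ := ∫ x, (Ft 0 x ^ 2 + Fx 0 x ^ 2 + W x * F 0 x ^ 2) with hK₁
  set K₂ := (∫ x, F 0 x ^ 2) + K with hK₂
  refine ⟨K₁ + K₂ + 1, fun t x => ?_⟩
  suffices hsq : F t x ^ 2 ≤ K₁ + K₂ by
    rw [← sq_abs] at hsq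
    nlinarith [sq_nonneg (|F t x| - 1)]
  -- Both energies are taken on `[-L, L]` with `L` beyond the light cone up to time `|t|`.
  set L := max (R + |t|) |x| + 2 with hL
  have hLt : R + |t| < L := by rw [hL]; linarith [le_max_left (R + |t|) |x|]
  have hLx : |x| < L := by rw [hL]; linarith [le_max_right (R + |t|) |x|]
  have ht0 := abs_nonneg t
  have hL0 : 0 < L := by linarith
  have hRL : R < L := by linarith
  have hRL' : R + 1 < L := by rw [hL]; linarith [le_max_left (R + |t|) |x|]
  have habsL : |L| = L := abs_of_pos hL0
  have hE1 : ∫ y in (-L)..L, (Ft t y ^ 2 + Fx t y ^ 2 + W y * F t y ^ 2) = K₁ := by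
    rw [energy_conservation hWc hFtC hFxC hFC hFttC hFxtC dFt dFtt dFxt dFtx dFxx (L := L)
      (T := |t|) (fun s hs => ⟨hFt0 s L (by rw [habsL]; linarith),
        hFt0 s (-L) (by rw [abs_neg, habsL]; linarith)⟩) t le_rfl]
    refine integral_of_vanishing hRL fun y hy => ?_
    have hy' : R + |(0 : ℝ)| < |y| := by simpa using hy
    rw [hFt0 0 y hy', hFx0 0 y hy', hsupp 0 y hy'.le]
    ring
  have hE2 : ∫ y in (-L)..L, (F t y ^ 2 + Gx t y ^ 2 + W y * G t y ^ 2) ≤ K₂ := by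
    rw [energy_conservation hWc hFC hGxC hGC hFtC hFxC dGt dFt dGxt dFx dGxx (L := L)
      (T := |t|) (fun s hs => ⟨hsupp s L (by rw [habsL]; linarith),
        hsupp s (-L) (by rw [abs_neg, habsL]; linarith)⟩) t le_rfl]
    have hG0 : ∀ y, G 0 y = h y := fun y => by simp [G]
    have hGx0 : ∀ y, Gx 0 y = h' y := fun y => by simp [Gx]
    simp only [hG0, hGx0, add_assoc]
    have cF0 := sec hFC 0
    rw [intervalIntegral.integral_add
      ((by fun_prop : Continuous fun y => F 0 y ^ 2).intervalIntegrable _ _)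
      ((by fun_prop : Continuous fun y => h' y ^ 2 + W y * h y ^ 2).intervalIntegrable _ _),
      integral_of_vanishing (φ := fun y => F 0 y ^ 2) hRL (fun y hy => by
        rw [hsupp 0 y (by simpa using hy.le)]; ring)]
    linarith [hK L hRL']
  have hxL := abs_lt.1 hLx
  have cF := sec hFC t
  have cFx := sec hFxC t
  have cFt := sec hFtC t
  have cG := sec hGC t
  have cGx := sec hGxC t
  have hFTC : F t x ^ 2 = ∫ y in (-L)..x, 2 * (F t y * Fx t y) := by
    rw [intervalIntegral.integral_eq_sub_of_hasDerivAt
      (f := fun y => F t y ^ 2) (fun y _ => ((dFx t y).pow 2).congr_deriv (by push_cast; ring))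
      ((by fun_prop : Continuous fun y => 2 * (F t y * Fx t y)).intervalIntegrable _ _),
      hsupp t (-L) (by rw [abs_neg, habsL]; linarith)]
    ring
  have c1 : Continuous fun y => Ft t y ^ 2 + Fx t y ^ 2 + W y * F t y ^ 2 := by fun_prop
  have c2 : Continuous fun y => F t y ^ 2 + Gx t y ^ 2 + W y * G t y ^ 2 := by fun_prop
  have c12 := c1.add c2
  have hpos : ∀ y, 0 ≤ (Ft t y ^ 2 + Fx t y ^ 2 + W y * F t y ^ 2)
      + (F t y ^ 2 + Gx t y ^ 2 + W y * G t y ^ 2) := by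
    intro y
    have := hW0 y
    positivity
  calc F t x ^ 2 = ∫ y in (-L)..x, 2 * (F t y * Fx t y) := hFTC
    _ ≤ ∫ y in (-L)..x, ((Ft t y ^ 2 + Fx t y ^ 2 + W y * F t y ^ 2)
          + (F t y ^ 2 + Gx t y ^ 2 + W y * G t y ^ 2)) := by
        refine intervalIntegral.integral_mono_on hxL.1.le
          ((by fun_prop : Continuous fun y => 2 * (F t y * Fx t y)).intervalIntegrable _ _)
          (c12.intervalIntegrable _ _) fun y _ => ?_
        have h1 := mul_nonneg (hW0 y) (sq_nonneg (F t y))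
        have h2 := mul_nonneg (hW0 y) (sq_nonneg (G t y))
        nlinarith [sq_nonneg (F t y - Fx t y), sq_nonneg (Ft t y), sq_nonneg (Gx t y)]
    _ ≤ ∫ y in (-L)..L, ((Ft t y ^ 2 + Fx t y ^ 2 + W y * F t y ^ 2)
          + (F t y ^ 2 + Gx t y ^ 2 + W y * G t y ^ 2)) := by
        refine intervalIntegral.integral_mono_interval le_rfl hxL.1.le hxL.2.le
          (Filter.Eventually.of_forall hpos) (c12.intervalIntegrable _ _)
    _ ≤ K₁ + K₂ := by
        rw [intervalIntegral.integral_add (c1.intervalIntegrable _ _)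
          (c2.intervalIntegrable _ _), hE1]
        linarith
end

section
/- Fix v₀ ∈ ℝ and set H₀ = ∂_rΦ(v₀,m) + Φ(v₀,m)/m. Then for every v ∈ ℝ, ∂²_rΦ(v, m) = ∂²_rΦ(v₀, m) + (2/m²)·(Φ(v,m) − Φ(v₀,m)) − (H₀/m²)·(v − v₀) + (1/m³)·∫_{v₀}^{v} Φ(w, m) dw. -/
/-!
Evaluating the wave equation at `r = m` gives `∂_v (∂_rΦ + Φ/m) = 0`, so that the Aretakis quantity
is conserved along the horizon. Differentiating the wave equation in `r` at `r = m` and commuting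
partial derivatives (`deriv_comm_of_smooth`) gives
`∂_v ∂²_rΦ = -∂_rΦ/m² - ∂_v∂_rΦ/m + ∂_vΦ/m²`. Substituting `∂_v∂_rΦ = -∂_vΦ/m` and
`∂_rΦ = H₀ - Φ/m` turns this into `∂_v ∂²_rΦ = 2∂_vΦ/m² - H₀/m² + Φ/m³`, whose integral from `v₀`
to `v` is the claim. Integration takes the form that the difference of the two sides has zero
derivative.
-/

lemma hasDerivAt_snd_of_smooth {F : ℝ → ℝ → ℝ} (hF : ContDiff ℝ (⊤ : ℕ∞) (Function.uncurry F))
    (v r : ℝ) : HasDerivAt (F v) (fderiv ℝ (Function.uncurry F) (v, r) (0, 1)) r :=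
  (hF.differentiable (by simp) (v, r)).hasFDerivAt.comp_hasDerivAt r
    ((hasDerivAt_const r v).prodMk (hasDerivAt_id r))

lemma hasDerivAt_fst_of_smooth {F : ℝ → ℝ → ℝ} (hF : ContDiff ℝ (⊤ : ℕ∞) (Function.uncurry F))
    (v r : ℝ) :
    HasDerivAt (fun w => F w r) (fderiv ℝ (Function.uncurry F) (v, r) (1, 0)) v :=
  (hF.differentiable (by simp) (v, r)).hasFDerivAt.comp_hasDerivAt (f := fun w => (w, r)) v
    ((hasDerivAt_id v).prodMk (hasDerivAt_const v r))

lemma contDiff_fderiv_apply {F : ℝ → ℝ → ℝ} (hF : ContDiff ℝ (⊤ : ℕ∞) (Function.uncurry F))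
    (u : ℝ × ℝ) : ContDiff ℝ (⊤ : ℕ∞) (fun p => fderiv ℝ (Function.uncurry F) p u) :=
  (hF.fderiv_right (m := (⊤ : ℕ∞)) (by simp)).clm_apply contDiff_const

lemma contDiff_deriv_snd {F : ℝ → ℝ → ℝ} (hF : ContDiff ℝ (⊤ : ℕ∞) (Function.uncurry F)) :
    ContDiff ℝ (⊤ : ℕ∞) (Function.uncurry fun v r => deriv (F v) r) := by
  convert contDiff_fderiv_apply hF (0, 1) using 1
  ext ⟨v, r⟩
  exact (hasDerivAt_snd_of_smooth hF v r).deriv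

lemma contDiff_deriv_fst {F : ℝ → ℝ → ℝ} (hF : ContDiff ℝ (⊤ : ℕ∞) (Function.uncurry F)) :
    ContDiff ℝ (⊤ : ℕ∞) (Function.uncurry fun v r => deriv (fun w => F w r) v) := by
  convert contDiff_fderiv_apply hF (1, 0) using 1
  ext ⟨v, r⟩
  exact (hasDerivAt_fst_of_smooth hF v r).deriv

lemma deriv_comm_of_smooth {F : ℝ → ℝ → ℝ} (hF : ContDiff ℝ (⊤ : ℕ∞) (Function.uncurry F))
    (v r : ℝ) :
    deriv (fun s => deriv (fun w => F w s) v) r = deriv (fun w => deriv (F w) r) v := by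
  have hsymm : IsSymmSndFDerivAt ℝ (Function.uncurry F) (v, r) :=
    hF.contDiffAt.isSymmSndFDerivAt (by
      rw [minSmoothness_of_isRCLikeNormedField]
      exact WithTop.coe_le_coe.2 le_top)
  have hd : HasFDerivAt (fderiv ℝ (Function.uncurry F))
      (fderiv ℝ (fderiv ℝ (Function.uncurry F)) (v, r)) (v, r) :=
    ((hF.fderiv_right (m := (⊤ : ℕ∞)) (by simp)).differentiable (by simp) _).hasFDerivAt
  have h1 : HasDerivAt (fun s => fderiv ℝ (Function.uncurry F) (v, s) (1, 0))
      (fderiv ℝ (fderiv ℝ (Function.uncurry F)) (v, r) (0, 1) (1, 0)) r := by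
    simpa using (hd.comp_hasDerivAt (f := fun s => (v, s)) r
      ((hasDerivAt_const r v).prodMk (hasDerivAt_id r))).clm_apply
        (hasDerivAt_const r ((1, 0) : ℝ × ℝ))
  have h2 : HasDerivAt (fun w => fderiv ℝ (Function.uncurry F) (w, r) (0, 1))
      (fderiv ℝ (fderiv ℝ (Function.uncurry F)) (v, r) (1, 0) (0, 1)) v := by
    simpa using (hd.comp_hasDerivAt (f := fun w => (w, r)) v
      ((hasDerivAt_id v).prodMk (hasDerivAt_const v r))).clm_apply
        (hasDerivAt_const v ((0, 1) : ℝ × ℝ))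
  simp_rw [fun s => (hasDerivAt_fst_of_smooth hF v s).deriv,
    fun w => (hasDerivAt_snd_of_smooth hF w r).deriv]
  rw [h1.deriv, h2.deriv, hsymm.eq]

lemma differentiableAt_snd_of_smooth {F : ℝ → ℝ → ℝ}
    (hF : ContDiff ℝ (⊤ : ℕ∞) (Function.uncurry F)) (v r : ℝ) : DifferentiableAt ℝ (F v) r :=
  (hasDerivAt_snd_of_smooth hF v r).differentiableAt

lemma differentiableAt_fst_of_smooth {F : ℝ → ℝ → ℝ}
    (hF : ContDiff ℝ (⊤ : ℕ∞) (Function.uncurry F)) (v r : ℝ) :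
    DifferentiableAt ℝ (fun w => F w r) v :=
  (hasDerivAt_fst_of_smooth hF v r).differentiableAt

/-- Integrated form of the evolution of the second transverse derivative at the
horizon (equation (pr2h) of the paper): with `H₀ = ∂_rΦ(v₀,m) + Φ(v₀,m)/m`,
`∂²_rΦ(v,m) = ∂²_rΦ(v₀,m) + (2/m²)(Φ(v,m) - Φ(v₀,m)) - (H₀/m²)(v - v₀)
+ (1/m³)·∫_{v₀}^v Φ(w,m) dw` for every `v`. -/
theorem second_transverse_derivative_integrated (m : ℝ) (hm : 0 < m)
    (Φ : ℝ → ℝ → ℝ) (hΦ : ContDiff ℝ (⊤ : ℕ∞) (Function.uncurry Φ))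
    (hwave : ∀ v r : ℝ, 0 < r →
      ((r - m) / r) ^ 2 * deriv (deriv (Φ v)) r
        + 2 * ((r - m) / r ^ 2) * deriv (Φ v) r
        + 2 * deriv (fun w => deriv (Φ w) r) v
        + (2 / r) * deriv (fun w => Φ w r) v = 0)
    (v₀ : ℝ) :
    ∀ v : ℝ, deriv (deriv (Φ v)) m
      = deriv (deriv (Φ v₀)) m
        + (2 / m ^ 2) * (Φ v m - Φ v₀ m)
        - ((deriv (Φ v₀) m + Φ v₀ m / m) / m ^ 2) * (v - v₀)
        + (1 / m ^ 3) * ∫ w in v₀..v, Φ w m := by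
  have hm0 : m ≠ 0 := hm.ne'
  have hR := contDiff_deriv_snd hΦ
  have hRR := contDiff_deriv_snd hR
  have hV := contDiff_deriv_fst hΦ
  have hRV := contDiff_deriv_fst hR
  have hhor : ∀ v, deriv (fun w => deriv (Φ w) m) v = -(deriv (fun w => Φ w m) v / m) := by
    intro v
    have h := hwave v m hm
    simp only [sub_self, zero_div] at h
    linear_combination h / 2
  have hcons : ∀ v, deriv (Φ v) m + Φ v m / m = deriv (Φ v₀) m + Φ v₀ m / m := by
    have hd : ∀ v, HasDerivAt (fun w => deriv (Φ w) m + Φ w m / m) 0 v := by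
      intro v
      have h := (differentiableAt_fst_of_smooth hR v m).hasDerivAt.add
        ((differentiableAt_fst_of_smooth hΦ v m).hasDerivAt.div_const m)
      rw [hhor v, neg_add_cancel] at h
      exact h
    intro v
    exact is_const_of_deriv_eq_zero (fun v => (hd v).differentiableAt) (fun v => (hd v).deriv) v v₀
  have hevol : ∀ v, deriv (fun w => deriv (deriv (Φ w)) m) v
      = (2 / m ^ 2) * deriv (fun w => Φ w m) v
        - (deriv (Φ v₀) m + Φ v₀ m / m) / m ^ 2 + (1 / m ^ 3) * Φ v m := by
    intro v
    -- The `r`-derivative at `r = m` of the left-hand side of the wave equation.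
    have hid : HasDerivAt (fun r : ℝ => r - m) 1 m := (hasDerivAt_id m).sub_const m
    have t1 := ((hid.div (hasDerivAt_id m) hm0).pow 2).mul
      (differentiableAt_snd_of_smooth hRR v m).hasDerivAt
    have t2 := ((hid.div (hasDerivAt_pow 2 m) (pow_ne_zero 2 hm0)).const_mul 2).mul
      (differentiableAt_snd_of_smooth hR v m).hasDerivAt
    have t3 := (differentiableAt_snd_of_smooth hRV v m).hasDerivAt.const_mul 2
    have t4 := ((hasDerivAt_const m (2 : ℝ)).div (hasDerivAt_id m) hm0).mul
      (differentiableAt_snd_of_smooth hV v m).hasDerivAt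
    have hsum := ((t1.add t2).add t3).add t4
    have hzero := hsum.unique ((hasDerivAt_const m (0 : ℝ)).congr_of_eventuallyEq
      ((eventually_gt_nhds hm).mono fun r hr => hwave v r hr))
    have hc1 : deriv (fun s => deriv (fun w => deriv (Φ w) s) v) m
        = deriv (fun w => deriv (deriv (Φ w)) m) v := deriv_comm_of_smooth hR v m
    have hc2 := deriv_comm_of_smooth hΦ v m
    simp only [hc1, hc2, hhor v] at hzero
    have hc := hcons v
    simp at hzero
    field_simp at hzero hc ⊢
    linear_combination (m / 2) * hzero - hc
  have hcont : Continuous fun w => Φ w m :=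
    hΦ.continuous.comp (Continuous.prodMk continuous_id continuous_const)
  have hd : ∀ v, HasDerivAt (fun v => deriv (deriv (Φ v)) m - ((2 / m ^ 2) * (Φ v m - Φ v₀ m)
      - ((deriv (Φ v₀) m + Φ v₀ m / m) / m ^ 2) * (v - v₀)
      + (1 / m ^ 3) * ∫ w in v₀..v, Φ w m)) 0 v := by
    intro v
    have h := (differentiableAt_fst_of_smooth hRR v m).hasDerivAt.sub
      ((((((differentiableAt_fst_of_smooth hΦ v m).hasDerivAt.sub_const (Φ v₀ m)).const_mul
        (2 / m ^ 2)).sub (((hasDerivAt_id v).sub_const v₀).const_mul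
          ((deriv (Φ v₀) m + Φ v₀ m / m) / m ^ 2)))).add
        ((hcont.integral_hasStrictDerivAt v₀ v).hasDerivAt.const_mul (1 / m ^ 3)))
    refine h.congr_deriv ?_
    have := hevol v
    linear_combination this
  intro v
  have h := is_const_of_deriv_eq_zero (fun v => (hd v).differentiableAt)
    (fun v => (hd v).deriv) v v₀
  simp only [sub_self, mul_zero, intervalIntegral.integral_same, add_zero, sub_zero] at h
  linear_combination h
end
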